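/- arXiv:1906.08997 — 2 statements merged into one kernel-verified Lean document; each statement's English description precedes it below -/
import Mathlib

section
/- Let ρ_AB be a bipartite density matrix on ℂ^{d_A}⊗ℂ^{d_B}, let U_A be an incoherent unitary on ℂ^{d_A} (i.e., U_A|j⟩ = e^{iθ_j}|π(j)⟩ for some permutation π of {0,...,d_A−1} and phases θ_j), and let U_B be any unitary on ℂ^{d_B}. Then D_{B|A}((U_A⊗U_B) ρ_AB (U_A⊗U_B)†) = D_{B|A}(ρ_AB). -/
open Matrix Kronecker BigOperators
open scoped ComplexOrder

noncomputable section

/-- The completely dephasing map `Δ`: keeps only the diagonal entries. -/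
def deph {n : Type*} [DecidableEq n] (M : Matrix n n ℂ) : Matrix n n ℂ :=
  Matrix.of fun i j => if i = j then M i j else 0

/-- A density matrix: positive semidefinite with unit trace. -/
def IsDensityMatrix {n : Type*} [Fintype n] (ρ : Matrix n n ℂ) : Prop :=
  ρ.PosSemidef ∧ ρ.trace = 1

/-- Von Neumann entropy (base 2): `S(ρ) = -∑ λ_k log₂ λ_k`. -/
def vnEntropy {n : Type*} [Fintype n] [DecidableEq n] (ρ : Matrix n n ℂ) : ℝ :=
  if h : ρ.IsHermitian then -∑ k, h.eigenvalues k * Real.logb 2 (h.eigenvalues k) else 0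

/-- Partial trace over the second factor: `ρ_A = tr_B ρ_AB`. -/
def ptrB {A B : Type*} [Fintype B] (ρ : Matrix (A × B) (A × B) ℂ) : Matrix A A ℂ :=
  Matrix.of fun a a' => ∑ b, ρ (a, b) (a', b)

/-- Partial trace over the first factor: `ρ_B = tr_A ρ_AB`. -/
def ptrA {A B : Type*} [Fintype A] (ρ : Matrix (A × B) (A × B) ℂ) : Matrix B B ℂ :=
  Matrix.of fun b b' => ∑ a, ρ (a, b) (a, b')

/-- `p_i = tr((|i⟩⟨i|⊗1) ρ_AB)`. -/
def probA {A B : Type*} [Fintype B] (ρ : Matrix (A × B) (A × B) ℂ) (i : A) : ℝ :=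
  (∑ b, ρ (i, b) (i, b)).re

/-- `ρ_{B|i} = tr_A((|i⟩⟨i|⊗1) ρ_AB) / p_i`. -/
def condB {A B : Type*} [Fintype B] (ρ : Matrix (A × B) (A × B) ℂ) (i : A) :
    Matrix B B ℂ :=
  ((probA ρ i : ℝ) : ℂ)⁻¹ • Matrix.of fun b b' => ρ (i, b) (i, b')

/-- Quantum discord based on incoherent measurement:
`D_{B|A}(ρ) = ∑ᵢ pᵢ S(ρ_{B|i}) + S(ρ_A) − S(ρ_AB)`. -/
def QDI {A B : Type*} [Fintype A] [Fintype B] [DecidableEq A] [DecidableEq B]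
    (ρ : Matrix (A × B) (A × B) ℂ) : ℝ :=
  (∑ i, probA ρ i * vnEntropy (condB ρ i)) + vnEntropy (ptrB ρ) - vnEntropy ρ

/-- Dephasing on the first subsystem: `Δ_A ⊗ id`. -/
def dephA {A B : Type*} [DecidableEq A] (ρ : Matrix (A × B) (A × B) ℂ) :
    Matrix (A × B) (A × B) ℂ :=
  Matrix.of fun p q => if p.1 = q.1 then ρ p q else 0

/-- Dephasing on the second subsystem: `id ⊗ Δ_B`. -/
def dephB {A B : Type*} [DecidableEq B] (ρ : Matrix (A × B) (A × B) ℂ) :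
    Matrix (A × B) (A × B) ℂ :=
  Matrix.of fun p q => if p.2 = q.2 then ρ p q else 0

/-- Trace out the last system of a tripartite state on `A × (B × B')`, leaving `A × B`. -/
def ptrB2 {A B B' : Type*} [Fintype B'] (ρ : Matrix (A × B × B') (A × B × B') ℂ) :
    Matrix (A × B) (A × B) ℂ :=
  Matrix.of fun p q => ∑ c, ρ (p.1, p.2, c) (q.1, q.2, c)

/-- Trace out the middle system of a tripartite state on `A × (B × B')`, leaving `A × B'`. -/
def ptrB1 {A B B' : Type*} [Fintype B] (ρ : Matrix (A × B × B') (A × B × B') ℂ) :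
    Matrix (A × B') (A × B') ℂ :=
  Matrix.of fun p q => ∑ b, ρ (p.1, b, p.2) (q.1, b, q.2)

/-!
Write `ρ = ∑ |i⟩⟨j| ⊗ ρᵢⱼ` with blocks `ρᵢⱼ` on the second factor. Conjugation by `U ⊗ V` replaces
the block `ρᵢⱼ` by a combination of the matrices `V ρₖₗ Vᴴ`. Taking traces of the blocks, `ρ_A`
becomes `U ρ_A Uᴴ`, so its entropy, like that of `ρ`, is unchanged for unitary `U`. If moreover `U`
permutes the incoherent basis up to phases, the phases cancel on the diagonal blocks: the outcome
`π i` of the new state has the probability of the outcome `i` of `ρ`, and its conditional state is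
that of `i` conjugated by `V`. Hence the three terms of the discord are each preserved.
-/

theorem submatrix_kronecker_mul_mul_kronecker {l m n o p q r s R : Type*} [CommSemiring R]
    [Fintype m] [Fintype n] [Fintype q] [Fintype r] (U : Matrix l m R) (V : Matrix p q R)
    (X : Matrix (m × q) (n × r) R) (W : Matrix n o R) (Z : Matrix r s R) (i : l) (j : o) :
    ((U ⊗ₖ V) * X * (W ⊗ₖ Z)).submatrix (Prod.mk i) (Prod.mk j) =
      ∑ k', ∑ k, (U i k * W k' j) • (V * X.submatrix (Prod.mk k) (Prod.mk k') * Z) := by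
  ext b b'
  simp only [submatrix_apply, mul_apply, kroneckerMap_apply, Fintype.sum_prod_type,
    Matrix.sum_apply, Matrix.smul_apply, smul_eq_mul, Finset.sum_mul, Finset.mul_sum]
  refine Finset.sum_congr rfl fun k' _ ↦ ?_
  rw [Finset.sum_comm]
  refine Finset.sum_congr rfl fun k _ ↦ Finset.sum_congr rfl fun c' _ ↦
    Finset.sum_congr rfl fun c _ ↦ ?_
  ring

theorem trace_mul_mul_conjTranspose_of_isometry {m n R : Type*} [CommSemiring R] [Star R]
    [Fintype m] [Fintype n] [DecidableEq n] {V : Matrix m n R} (hV : Vᴴ * V = 1)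
    (X : Matrix n n R) : (V * X * Vᴴ).trace = X.trace := by
  rw [trace_mul_cycle, hV, one_mul]

section PartialTrace

variable {A B C D : Type*}

theorem ptrB_apply_eq_trace [Fintype B] (ρ : Matrix (A × B) (A × B) ℂ) (a a' : A) :
    ptrB ρ a a' = (ρ.submatrix (Prod.mk a) (Prod.mk a')).trace :=
  rfl

theorem probA_eq_re_trace [Fintype B] (ρ : Matrix (A × B) (A × B) ℂ) (i : A) :
    probA ρ i = (ρ.submatrix (Prod.mk i) (Prod.mk i)).trace.re :=
  rfl

theorem condB_eq_smul_submatrix [Fintype B] (ρ : Matrix (A × B) (A × B) ℂ) (i : A) :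
    condB ρ i = (probA ρ i : ℂ)⁻¹ • ρ.submatrix (Prod.mk i) (Prod.mk i) :=
  rfl

theorem isHermitian_ptrB [Fintype B] {ρ : Matrix (A × B) (A × B) ℂ} (hρ : ρ.IsHermitian) :
    (ptrB ρ).IsHermitian := by
  ext a a'
  simp [ptrB, hρ.apply]

theorem isHermitian_condB [Fintype B] {ρ : Matrix (A × B) (A × B) ℂ} (hρ : ρ.IsHermitian)
    (i : A) : (condB ρ i).IsHermitian :=
  (hρ.submatrix (Prod.mk i)).smul (by simp [isSelfAdjoint_iff])

theorem ptrB_kronecker_conj [Fintype A] [Fintype B] [Fintype D] [DecidableEq B]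
    (U : Matrix C A ℂ) {V : Matrix D B ℂ} (hV : Vᴴ * V = 1) (ρ : Matrix (A × B) (A × B) ℂ) :
    ptrB ((U ⊗ₖ V) * ρ * (U ⊗ₖ V)ᴴ) = U * ptrB ρ * Uᴴ := by
  ext a a'
  simp only [ptrB_apply_eq_trace, conjTranspose_kronecker, submatrix_kronecker_mul_mul_kronecker,
    trace_sum, trace_smul, trace_mul_mul_conjTranspose_of_isometry hV, mul_apply,
    Finset.sum_mul, smul_eq_mul, mul_right_comm]

end PartialTrace

theorem vnEntropy_unitary_conj {n : Type*} [Fintype n] [DecidableEq n] {U M : Matrix n n ℂ}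
    (hM : M.IsHermitian) (hU : U ∈ unitaryGroup n ℂ) :
    vnEntropy (U * M * Uᴴ) = vnEntropy M := by
  have hUM : (U * M * Uᴴ).IsHermitian := isHermitian_mul_mul_conjTranspose U hM
  have hcharpoly : (U * M * Uᴴ).charpoly = M.charpoly := by
    rw [charpoly_mul_comm, ← mul_assoc, ← star_eq_conjTranspose, mem_unitaryGroup_iff'.1 hU,
      one_mul]
  simp only [vnEntropy, dif_pos hUM, dif_pos hM,
    (hUM.eigenvalues_eq_eigenvalues_iff hM).2 hcharpoly]

section IncoherentUnitary

variable {A B : Type*} [DecidableEq A]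

/-- The incoherent unitary `|j⟩ ↦ u j |π j⟩`, which permutes the incoherent basis up to phases. -/
def incoherentUnitary (π : Equiv.Perm A) (u : A → Circle) : Matrix A A ℂ :=
  of fun a j ↦ if a = π j then (u j : ℂ) else 0

@[simp]
theorem incoherentUnitary_apply_perm (π : Equiv.Perm A) (u : A → Circle) (i j : A) :
    incoherentUnitary π u (π i) j = if i = j then (u j : ℂ) else 0 := by
  simp [incoherentUnitary]

variable [Fintype A] (π : Equiv.Perm A) (u : A → Circle)

theorem incoherentUnitary_mem_unitaryGroup : incoherentUnitary π u ∈ unitaryGroup A ℂ := by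
  rw [mem_unitaryGroup_iff']
  ext i j
  rw [mul_apply, ← Equiv.sum_comp π]
  obtain rfl | hij := eq_or_ne i j
  · simp [← Complex.normSq_eq_conj_mul_self]
  · simp [hij, hij.symm]

variable [Fintype B]

theorem submatrix_incoherentUnitary_kronecker_conj (V : Matrix B B ℂ)
    (ρ : Matrix (A × B) (A × B) ℂ) (i : A) :
    ((incoherentUnitary π u ⊗ₖ V) * ρ * (incoherentUnitary π u ⊗ₖ V)ᴴ).submatrix
        (Prod.mk (π i)) (Prod.mk (π i)) =
      V * ρ.submatrix (Prod.mk i) (Prod.mk i) * Vᴴ := by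
  simp [conjTranspose_kronecker, submatrix_kronecker_mul_mul_kronecker, apply_ite (starRingEnd ℂ),
    ite_smul, Complex.mul_conj]

theorem probA_incoherentUnitary_kronecker_conj [DecidableEq B] {V : Matrix B B ℂ}
    (hV : Vᴴ * V = 1) (ρ : Matrix (A × B) (A × B) ℂ) (i : A) :
    probA ((incoherentUnitary π u ⊗ₖ V) * ρ * (incoherentUnitary π u ⊗ₖ V)ᴴ) (π i) =
      probA ρ i := by
  simp only [probA_eq_re_trace, submatrix_incoherentUnitary_kronecker_conj,
    trace_mul_mul_conjTranspose_of_isometry hV]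

theorem condB_incoherentUnitary_kronecker_conj [DecidableEq B] {V : Matrix B B ℂ}
    (hV : Vᴴ * V = 1) (ρ : Matrix (A × B) (A × B) ℂ) (i : A) :
    condB ((incoherentUnitary π u ⊗ₖ V) * ρ * (incoherentUnitary π u ⊗ₖ V)ᴴ) (π i) =
      V * condB ρ i * Vᴴ := by
  rw [condB_eq_smul_submatrix, probA_incoherentUnitary_kronecker_conj π u hV,
    submatrix_incoherentUnitary_kronecker_conj, condB_eq_smul_submatrix,
    Matrix.mul_smul, Matrix.smul_mul]

end IncoherentUnitary

theorem stmt8_general {A B : Type*} [Fintype A] [Fintype B] [DecidableEq A] [DecidableEq B]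
    {ρ : Matrix (A × B) (A × B) ℂ} (hρ : ρ.PosSemidef) (π : Equiv.Perm A) (u : A → Circle)
    {V : Matrix B B ℂ} (hV : V ∈ unitaryGroup B ℂ) :
    QDI ((incoherentUnitary π u ⊗ₖ V) * ρ * (incoherentUnitary π u ⊗ₖ V)ᴴ) = QDI ρ := by
  have hU : incoherentUnitary π u ∈ unitaryGroup A ℂ := incoherentUnitary_mem_unitaryGroup π u
  have hV' : Vᴴ * V = 1 := mem_unitaryGroup_iff'.1 hV
  have hρ' : ρ.IsHermitian := hρ.isHermitian
  unfold QDI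
  rw [ptrB_kronecker_conj _ hV', vnEntropy_unitary_conj (isHermitian_ptrB hρ') hU,
    vnEntropy_unitary_conj hρ' (kronecker_mem_unitary hU hV), ← Equiv.sum_comp π]
  simp only [probA_incoherentUnitary_kronecker_conj π u hV',
    condB_incoherentUnitary_kronecker_conj π u hV',
    vnEntropy_unitary_conj (isHermitian_condB hρ' _) hV]

/-- QDI is invariant under an incoherent unitary on `A` together with an
arbitrary unitary on `B`. -/
theorem stmt8 {dA dB : ℕ} (ρ : Matrix (Fin dA × Fin dB) (Fin dA × Fin dB) ℂ)
    (hρ : IsDensityMatrix ρ)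
    (UA : Matrix (Fin dA) (Fin dA) ℂ) (π : Equiv.Perm (Fin dA)) (θ : Fin dA → ℝ)
    (hUA : ∀ a j, UA a j = if a = π j then Complex.exp (Complex.I * (θ j : ℝ)) else 0)
    (UB : Matrix (Fin dB) (Fin dB) ℂ)
    (hUB : UB * UBᴴ = 1 ∧ UBᴴ * UB = 1) :
    QDI ((UA ⊗ₖ UB) * ρ * (UA ⊗ₖ UB)ᴴ) = QDI ρ := by
  obtain rfl : UA = incoherentUnitary π fun j ↦ Circle.exp (θ j) := by
    ext a j
    simp [hUA, incoherentUnitary, mul_comm]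
  exact stmt8_general hρ.1 π _ (mem_unitaryGroup_iff.2 hUB.1)
end
end

section
/- Let ρ^W_ABB' = |W⟩⟨W| with |W⟩ = (|001⟩ + |010⟩ + |100⟩)/√3 ∈ ℂ²⊗ℂ²⊗ℂ². Then D_{B|A}(ρ^W_AB) + D_{B'|A}(ρ^W_AB') − D_{BB'|A}(ρ^W_ABB') = 2 − log₂3 > 0, where ρ^W_AB = tr_{B'}(ρ^W_ABB') and ρ^W_AB' = tr_B(ρ^W_ABB'). -/
open Matrix Kronecker BigOperators
open scoped ComplexOrder

noncomputable section

/-- The W state `|W⟩ = (|001⟩ + |010⟩ + |100⟩)/√3`. -/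
def wVec : Fin 2 × Fin 2 × Fin 2 → ℂ :=
  fun p => if p = (0, 0, 1) ∨ p = (0, 1, 0) ∨ p = (1, 0, 0)
    then ((Real.sqrt 3 : ℝ) : ℂ)⁻¹ else 0

/-!
The entropy of a Hermitian matrix depends only on its nonzero spectrum, so `S (M * N) = S (N * M)`.
Hence a pure state, also after conditioning on a measurement outcome, has zero entropy, and its two
marginals have equal entropy. For a pure tripartite state this gives `D_{BB'|A} = S(ρ_A)` and
`S(ρ_AB) = S(ρ_B')`. All one-qubit marginals of the W state are `diag(2/3, 1/3)`, so `S(ρ_A)` and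
`S(ρ_AB)` cancel in `D_{B|A}`, leaving `(2/3) · S(diag(1/2, 1/2)) + (1/3) · S(diag(1, 0)) = 2/3`. By
symmetry `D_{B'|A}` is the same, and the total is `4/3 - S(diag(2/3, 1/3)) = 2 - log₂ 3`.
-/

open Real Polynomial

section Entropy

lemma isHermitian_diagonal_ofReal {n : Type*} [DecidableEq n] (d : n → ℝ) :
    (diagonal fun i => (d i : ℂ)).IsHermitian :=
  isHermitian_diagonal_iff.mpr fun i => Complex.conj_ofReal (d i)

variable {m n : Type*} [Fintype m] [DecidableEq m] [Fintype n] [DecidableEq n]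

lemma vnEntropy_eq_sum_roots_charpoly {ρ : Matrix n n ℂ} (hρ : ρ.IsHermitian) :
    vnEntropy ρ = (ρ.charpoly.roots.map fun z => negMulLog z.re).sum / log 2 := by
  simp [vnEntropy, hρ, hρ.roots_charpoly_eq_eigenvalues, negMulLog, logb, ← mul_div_assoc,
    ← Finset.sum_div, neg_div]

lemma sum_negMulLog_roots_X_pow_mul {p : ℂ[X]} (hp : p ≠ 0) (k : ℕ) :
    ((X ^ k * p).roots.map fun z : ℂ => negMulLog z.re).sum =
      (p.roots.map fun z => negMulLog z.re).sum := by
  rw [roots_mul (mul_ne_zero (pow_ne_zero k X_ne_zero) hp), roots_X_pow, Multiset.map_add,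
    Multiset.map_nsmul]
  simp [Multiset.sum_nsmul]

lemma vnEntropy_mul_comm (M : Matrix m n ℂ) (N : Matrix n m ℂ) (hMN : (M * N).IsHermitian)
    (hNM : (N * M).IsHermitian) : vnEntropy (M * N) = vnEntropy (N * M) := by
  rw [vnEntropy_eq_sum_roots_charpoly hMN, vnEntropy_eq_sum_roots_charpoly hNM,
    ← sum_negMulLog_roots_X_pow_mul (charpoly_monic (M * N)).ne_zero (Fintype.card n),
    charpoly_mul_comm', sum_negMulLog_roots_X_pow_mul (charpoly_monic (N * M)).ne_zero]

lemma vnEntropy_transpose {ρ : Matrix n n ℂ} (hρ : ρ.IsHermitian) :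
    vnEntropy ρᵀ = vnEntropy ρ := by
  rw [vnEntropy_eq_sum_roots_charpoly hρ.transpose, vnEntropy_eq_sum_roots_charpoly hρ,
    charpoly_transpose]

lemma vnEntropy_diagonal (d : n → ℝ) :
    vnEntropy (diagonal fun i => (d i : ℂ)) = (∑ i, negMulLog (d i)) / log 2 := by
  have h_roots : (diagonal fun i => (d i : ℂ)).charpoly.roots =
      Finset.univ.val.map fun i => (d i : ℂ) := by
    rw [charpoly_diagonal,
      roots_prod _ _ (Finset.prod_ne_zero_iff.mpr fun i _ => X_sub_C_ne_zero _)]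
    simp
  rw [vnEntropy_eq_sum_roots_charpoly (isHermitian_diagonal_ofReal d), h_roots]
  simp

/-- The qubit state with populations `p` and `1 - p` and no coherence, a state only for
`0 ≤ p ≤ 1`. All one-qubit marginals and conditional states of the W state are of this form. -/
def incoherentQubit (p : ℝ) : Matrix (Fin 2) (Fin 2) ℂ :=
  diagonal fun i => ((![p, 1 - p] i : ℝ) : ℂ)

lemma vnEntropy_incoherentQubit (p : ℝ) :
    vnEntropy (incoherentQubit p) = binEntropy p / log 2 := by
  rw [incoherentQubit, vnEntropy_diagonal, binEntropy_eq_negMulLog_add_negMulLog_one_sub]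
  simp

end Entropy

section PureState

variable {n A B C : Type*}

/-- The pure state `|ψ⟩⟨ψ|`. The vector `ψ` need not be normalized, so that the unnormalized
state after a measurement outcome is covered too. -/
abbrev pureState (ψ : n → ℂ) : Matrix n n ℂ :=
  vecMulVec ψ (star ψ)

lemma isHermitian_pureState (ψ : n → ℂ) : (pureState ψ).IsHermitian := by
  simp [IsHermitian, conjTranspose_vecMulVec]

lemma vnEntropy_real_smul_pureState [Fintype n] [DecidableEq n] (ψ : n → ℂ) (c : ℝ) :
    vnEntropy ((c : ℂ) • pureState ψ) = negMulLog (c * (ψ ⬝ᵥ star ψ).re) / log 2 := by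
  let ket : Matrix n Unit ℂ := replicateCol Unit ((c : ℂ) • ψ)
  let bra : Matrix Unit n ℂ := replicateRow Unit (star ψ)
  have h_outer : (c : ℂ) • pureState ψ = ket * bra := by
    rw [← smul_vecMulVec, vecMulVec_eq Unit]
  have h_inner : bra * ket = diagonal fun _ => ((c * (ψ ⬝ᵥ star ψ).re : ℝ) : ℂ) := by
    have h_real : ((ψ ⬝ᵥ star ψ).re : ℂ) = ψ ⬝ᵥ star ψ :=
      Complex.conj_eq_iff_re.mp (by rw [starRingEnd_apply, ← star_dotProduct_star, star_star])
    ext i j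
    rw [diagonal_unique, replicateRow_mul_replicateCol_apply, dotProduct_smul, dotProduct_comm,
      of_apply, Complex.ofReal_mul, h_real, smul_eq_mul]
  have h_herm : ((c : ℂ) • pureState ψ).IsHermitian :=
    (isHermitian_pureState ψ).smul (Complex.conj_ofReal c)
  rw [h_outer, vnEntropy_mul_comm ket bra (h_outer ▸ h_herm)
    (h_inner ▸ isHermitian_diagonal_ofReal _), h_inner, vnEntropy_diagonal]
  simp

lemma vnEntropy_pureState [Fintype n] [DecidableEq n] {ψ : n → ℂ} (hψ : ψ ⬝ᵥ star ψ = 1) :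
    vnEntropy (pureState ψ) = 0 := by
  simpa [hψ] using vnEntropy_real_smul_pureState ψ 1

lemma vnEntropy_condB_pureState [Fintype B] [DecidableEq B] (ψ : A × B → ℂ) (i : A) :
    vnEntropy (condB (pureState ψ) i) = 0 := by
  let φ : B → ℂ := fun b => ψ (i, b)
  have h_cond : condB (pureState ψ) i = (((φ ⬝ᵥ star φ).re⁻¹ : ℝ) : ℂ) • pureState φ := by
    rw [Complex.ofReal_inv]
    rfl
  rw [h_cond, vnEntropy_real_smul_pureState]
  -- If the outcome has probability `p = 0`, then `p⁻¹ * p = 0`, where `negMulLog` vanishes as well.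
  obtain hp | hp := eq_or_ne (φ ⬝ᵥ star φ).re 0 <;> simp [hp]

lemma QDI_pureState [Fintype A] [DecidableEq A] [Fintype B] [DecidableEq B] {ψ : A × B → ℂ}
    (hψ : ψ ⬝ᵥ star ψ = 1) :
    QDI (pureState ψ) = vnEntropy (ptrB (pureState ψ)) := by
  simp [QDI, vnEntropy_condB_pureState, vnEntropy_pureState hψ]

lemma vnEntropy_ptrB_pureState [Fintype A] [DecidableEq A] [Fintype B] [DecidableEq B]
    (ψ : A × B → ℂ) :
    vnEntropy (ptrB (pureState ψ)) = vnEntropy (ptrA (pureState ψ)) := by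
  let M : Matrix A B ℂ := of fun a b => ψ (a, b)
  have hB : ptrB (pureState ψ) = M * Mᴴ := rfl
  have hA : ptrA (pureState ψ) = (Mᴴ * M)ᵀ := by
    ext
    simp [ptrA, M, Matrix.mul_apply, vecMulVec_apply, mul_comm]
  rw [hB, hA, vnEntropy_transpose (isHermitian_conjTranspose_mul_self M),
    vnEntropy_mul_comm M Mᴴ (isHermitian_mul_conjTranspose_self M)
      (isHermitian_conjTranspose_mul_self M)]

lemma ptrB_ptrB2 [Fintype B] [Fintype C] (ρ : Matrix (A × B × C) (A × B × C) ℂ) :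
    ptrB (ptrB2 ρ) = ptrB ρ := by
  ext
  simp [ptrB, ptrB2, Fintype.sum_prod_type]

lemma probA_eq_re_ptrB [Fintype B] (ρ : Matrix (A × B) (A × B) ℂ) (i : A) :
    probA ρ i = (ptrB ρ i i).re :=
  rfl

lemma ptrB1_pureState_eq_ptrB2 [Fintype B] {ψ : A × B × B → ℂ}
    (hψ : ∀ a b c, ψ (a, b, c) = ψ (a, c, b)) :
    ptrB1 (pureState ψ) = ptrB2 (pureState ψ) := by
  ext p q
  simp [ptrB1, ptrB2, vecMulVec_apply, hψ p.1 _ p.2, hψ q.1 _ q.2]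

lemma vnEntropy_ptrB2_pureState [Fintype A] [DecidableEq A] [Fintype B] [DecidableEq B]
    [Fintype C] [DecidableEq C] (ψ : A × B × C → ℂ) :
    vnEntropy (ptrB2 (pureState ψ)) = vnEntropy (ptrA (ptrB1 (pureState ψ))) := by
  let φ : (A × B) × C → ℂ := fun p => ψ (p.1.1, p.1.2, p.2)
  have hAB : ptrB2 (pureState ψ) = ptrB (pureState φ) := rfl
  have hC : ptrA (ptrB1 (pureState ψ)) = ptrA (pureState φ) := by
    ext
    simp [ptrA, ptrB1, φ, vecMulVec_apply, Fintype.sum_prod_type]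
  rw [hAB, hC, vnEntropy_ptrB_pureState]

end PureState

section WState

lemma pureState_wVec_apply (p q : Fin 2 × Fin 2 × Fin 2) :
    pureState wVec p q =
      if (p = (0, 0, 1) ∨ p = (0, 1, 0) ∨ p = (1, 0, 0)) ∧
        (q = (0, 0, 1) ∨ q = (0, 1, 0) ∨ q = (1, 0, 0)) then 1 / 3 else 0 := by
  have h_sq : ((√3 : ℝ) : ℂ)⁻¹ * ((√3 : ℝ) : ℂ)⁻¹ = 1 / 3 := by
    rw [← mul_inv, ← Complex.ofReal_mul, mul_self_sqrt zero_le_three, one_div, Complex.ofReal_ofNat]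
  rw [pureState, vecMulVec_apply, Pi.star_apply, wVec, wVec, ite_and, ← h_sq]
  split_ifs <;> simp

lemma wVec_swap (a b c : Fin 2) : wVec (a, b, c) = wVec (a, c, b) := by
  simp only [wVec, Prod.mk.injEq]
  grind

lemma wVec_dotProduct_star : wVec ⬝ᵥ star wVec = 1 := by
  rw [← trace_vecMulVec]
  norm_num [trace, pureState_wVec_apply, Fintype.sum_prod_type]

lemma ptrB_pureState_wVec : ptrB (pureState wVec) = incoherentQubit (2 / 3) := by
  ext i j
  fin_cases i <;> fin_cases j <;>
    norm_num [ptrB, pureState_wVec_apply, incoherentQubit, Fintype.sum_prod_type]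

lemma ptrA_ptrB1_pureState_wVec : ptrA (ptrB1 (pureState wVec)) = incoherentQubit (2 / 3) := by
  ext i j
  fin_cases i <;> fin_cases j <;>
    norm_num [ptrA, ptrB1, pureState_wVec_apply, incoherentQubit]

lemma probA_ptrB2_pureState_wVec (i : Fin 2) :
    probA (ptrB2 (pureState wVec)) i = ![2 / 3, 1 / 3] i := by
  rw [probA_eq_re_ptrB, ptrB_ptrB2, ptrB_pureState_wVec, incoherentQubit, diagonal_apply_eq,
    Complex.ofReal_re]
  norm_num

lemma condB_ptrB2_pureState_wVec_zero :
    condB (ptrB2 (pureState wVec)) 0 = incoherentQubit 2⁻¹ := by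
  ext i j
  rw [condB, probA_ptrB2_pureState_wVec]
  fin_cases i <;> fin_cases j <;>
    norm_num [ptrB2, pureState_wVec_apply, incoherentQubit]

lemma condB_ptrB2_pureState_wVec_one :
    condB (ptrB2 (pureState wVec)) 1 = incoherentQubit 1 := by
  ext i j
  rw [condB, probA_ptrB2_pureState_wVec]
  fin_cases i <;> fin_cases j <;>
    simp [ptrB2, pureState_wVec_apply, incoherentQubit]

lemma QDI_pureState_wVec : QDI (pureState wVec) = binEntropy (2 / 3) / log 2 := by
  rw [QDI_pureState wVec_dotProduct_star, ptrB_pureState_wVec, vnEntropy_incoherentQubit]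

lemma QDI_ptrB2_pureState_wVec : QDI (ptrB2 (pureState wVec)) = 2 / 3 := by
  have h_marginals : vnEntropy (ptrB (ptrB2 (pureState wVec))) =
      vnEntropy (ptrB2 (pureState wVec)) := by
    rw [ptrB_ptrB2, ptrB_pureState_wVec, vnEntropy_ptrB2_pureState, ptrA_ptrB1_pureState_wVec]
  have h_log : log 2 ≠ 0 := (log_pos one_lt_two).ne'
  rw [QDI, h_marginals, add_sub_cancel_right, Fin.sum_univ_two, condB_ptrB2_pureState_wVec_zero,
    condB_ptrB2_pureState_wVec_one, vnEntropy_incoherentQubit, vnEntropy_incoherentQubit,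
    binEntropy_two_inv, binEntropy_one, div_self h_log]
  simp [probA_ptrB2_pureState_wVec]

end WState

lemma binEntropy_two_thirds : binEntropy (2 / 3) = log 3 - 2 / 3 * log 2 := by
  rw [binEntropy, show (1 - 2 / 3 : ℝ) = 1 / 3 by norm_num, inv_div, inv_div, div_one,
    log_div three_ne_zero two_ne_zero]
  ring

lemma logb_two_three_lt_two : logb 2 3 < 2 := by
  rw [logb_lt_iff_lt_rpow one_lt_two three_pos]
  norm_num

/-- for the W state,
`D_{B|A}(ρ_AB) + D_{B'|A}(ρ_AB') − D_{BB'|A}(ρ_ABB') = 2 − log₂3 > 0`. -/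
theorem stmt14 :
    QDI (ptrB2 (Matrix.vecMulVec wVec (star wVec))) +
        QDI (ptrB1 (Matrix.vecMulVec wVec (star wVec))) -
        QDI (Matrix.vecMulVec wVec (star wVec)) = 2 - Real.logb 2 3 ∧
      (0 : ℝ) < 2 - Real.logb 2 3 := by
  refine ⟨?_, sub_pos.mpr logb_two_three_lt_two⟩
  have h_log : log 2 ≠ 0 := (log_pos one_lt_two).ne'
  rw [ptrB1_pureState_eq_ptrB2 wVec_swap, QDI_ptrB2_pureState_wVec, QDI_pureState_wVec,
    binEntropy_two_thirds, logb]
  field_simp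
  ring
end
end
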